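/- Let s be a real number which is not an integer, let m = ⌊s⌋ be its integer floor, and let z > 0 be real. Then (−1)^{m+1} · z^{m+1/2} · q^{m s + s/2 − m(m+1)/2} · θ_q(z q^s) tends to 1 as q tends to 0 from the right (q ranging over (0,1)). -/

import Mathlib

open Filter Topology

/-- The q-theta function
`θ_q(x) = (x^{1/2} - x^{-1/2}) ∏_{i=1}^∞ (1 - x q^i)(1 - x⁻¹ q^i)`. -/
noncomputable def qTheta (q x : ℝ) : ℝ :=
  (Real.sqrt x - (Real.sqrt x)⁻¹) *
    ∏' i : ℕ, (1 - x * q ^ (i + 1)) * (1 - x⁻¹ * q ^ (i + 1))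

/-!
For `x > 0`, `θ_q(x) = -x^{-1/2} Θ(x)` with `Θ(x) = (x; q)_∞ (q/x; q)_∞`, and the functional
equation `Θ(q x) = -x⁻¹ Θ(x)` iterates to `Θ(x) = (-x)^m q^{m(m-1)/2} Θ(q^m x)` for every integer
`m`. The normalizing factor in front of `θ_q(z q^s)` is exactly the one that turns it into
`Θ(z q^{s-m})`. For `m = ⌊s⌋` and `s` not an integer, `0 < s - m < 1`, so both `z q^{s-m}` and
`q / (z q^{s-m})` tend to `0` with `q`, and `Θ → 1` since `(a; q)_∞` is continuous in `(q, a)` for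
`|q| < 1`.
-/

section QPochhammer

variable {R : Type*} [NormedCommRing R]

/-- The infinite `q`-Pochhammer symbol `(a; q)_∞ = ∏_{i ≥ 0} (1 - a q^i)`, with the base `q` as the
first argument, as in `qTheta`. -/
noncomputable def qPochhammer (q a : R) : R := ∏' i : ℕ, (1 - a * q ^ i)

@[simp]
lemma qPochhammer_zero_right (q : R) : qPochhammer q 0 = 1 := by
  simp [qPochhammer]

variable [NormOneClass R] [CompleteSpace R]

lemma multipliable_one_sub_mul_pow {q : R} (hq : ‖q‖ < 1) (a : R) :
    Multipliable fun i : ℕ ↦ 1 - a * q ^ i := by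
  simp only [sub_eq_add_neg]
  refine multipliable_one_add_of_summable ?_
  simpa only [norm_neg] using
    ((summable_geometric_of_lt_one (norm_nonneg q) hq).mul_left ‖a‖).of_nonneg_of_le
      (fun _ ↦ norm_nonneg _)
      fun i ↦ (norm_mul_le a (q ^ i)).trans (by gcongr; exact norm_pow_le q i)

lemma qPochhammer_eq_one_sub_mul {q : R} (hq : ‖q‖ < 1) (a : R) :
    qPochhammer q a = (1 - a) * qPochhammer q (q * a) := by
  have shift (i : ℕ) : 1 - a * q ^ (i + 1) = 1 - q * a * q ^ i := by ring
  unfold qPochhammer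
  rw [tprod_eq_zero_mul' (by simpa only [shift] using multipliable_one_sub_mul_pow hq (q * a))]
  simp only [shift, pow_zero, mul_one]

lemma continuousAt_qPochhammer {q : R} (hq : ‖q‖ < 1) (a : R) :
    ContinuousAt (fun p : R × R ↦ qPochhammer p.1 p.2) (q, a) := by
  obtain ⟨r, hqr, hr⟩ := exists_between hq
  obtain ⟨C, haC⟩ := exists_gt ‖a‖
  have hr_nonneg : 0 ≤ r := (norm_nonneg q).trans hqr.le
  have hC_nonneg : 0 ≤ C := (norm_nonneg a).trans haC.le
  have bound : ∀ᶠ p : R × R in 𝓝 (q, a), ∀ i : ℕ, ‖-(p.2 * p.1 ^ i)‖ ≤ C * r ^ i := by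
    filter_upwards [continuousAt_fst.norm.eventually_lt_const hqr,
      continuousAt_snd.norm.eventually_lt_const haC] with p hp₁ hp₂ i
    calc ‖-(p.2 * p.1 ^ i)‖ ≤ ‖p.2‖ * ‖p.1‖ ^ i := by
          rw [norm_neg]
          exact (norm_mul_le _ _).trans (by gcongr; exact norm_pow_le p.1 i)
      _ ≤ C * r ^ i := by gcongr
  simp only [ContinuousAt, qPochhammer, sub_eq_add_neg]
  exact tendsto_tprod_one_add_of_dominated_convergence
    ((summable_geometric_of_lt_one hr_nonneg hr).mul_left C)
    (fun i ↦ (by fun_prop : Continuous fun p : R × R ↦ -(p.2 * p.1 ^ i)).tendsto (q, a)) bound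

end QPochhammer

section ModifiedTheta

variable {K : Type*} [NormedField K] [CompleteSpace K] {q x : K}

/-- The modified Jacobi theta function `(x; q)_∞ (q/x; q)_∞`, which for `x > 0` is `qTheta q x`
without its square-root prefactor `-x^{-1/2}`. At `x = 0` it takes the junk value `1`. -/
noncomputable def modifiedTheta (q x : K) : K := qPochhammer q x * qPochhammer q (q / x)

lemma modifiedTheta_mul_left (hq : ‖q‖ < 1) (hq₀ : q ≠ 0) (hx : x ≠ 0) :
    modifiedTheta q (q * x) = -x⁻¹ * modifiedTheta q x := by
  have inv_arg : q / (q * x) = x⁻¹ := by field_simp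
  rw [modifiedTheta, modifiedTheta, inv_arg, qPochhammer_eq_one_sub_mul hq x⁻¹,
    qPochhammer_eq_one_sub_mul hq x, ← div_eq_mul_inv]
  field_simp
  ring

lemma zpow_mul_modifiedTheta_zpow_mul (hq : ‖q‖ < 1) (hq₀ : q ≠ 0) (hx : x ≠ 0) (m : ℤ) :
    (-x) ^ m * q ^ (m * (m - 1) / 2) * modifiedTheta q (q ^ m * x) = modifiedTheta q x := by
  have step (k : ℤ) :
      (-x) ^ (k + 1) * q ^ ((k + 1) * (k + 1 - 1) / 2) * modifiedTheta q (q ^ (k + 1) * x) =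
        (-x) ^ k * q ^ (k * (k - 1) / 2) * modifiedTheta q (q ^ k * x) := by
    have triangular : (k + 1) * (k + 1 - 1) / 2 = k * (k - 1) / 2 + k := by
      rw [← Int.add_mul_ediv_right _ _ two_ne_zero]
      ring_nf
    rw [triangular, zpow_add₀ hq₀, zpow_add_one₀ (neg_ne_zero.mpr hx), zpow_add_one₀ hq₀,
      mul_comm (q ^ k) q, mul_assoc q,
      modifiedTheta_mul_left hq hq₀ (mul_ne_zero (zpow_ne_zero k hq₀) hx)]
    field_simp
  induction m using Int.induction_on with
  | zero => simp
  | succ k ih => rw [step, ih]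
  | pred k ih => rw [← step, sub_add_cancel, ih]

end ModifiedTheta

lemma qTheta_eq_modifiedTheta {q x : ℝ} (hq : ‖q‖ < 1) (hx : 0 < x) :
    qTheta q x = -(√x)⁻¹ * modifiedTheta q x := by
  have prod_eq : ∏' i : ℕ, (1 - x * q ^ (i + 1)) * (1 - x⁻¹ * q ^ (i + 1)) =
      qPochhammer q (q * x) * qPochhammer q (q / x) := by
    unfold qPochhammer
    rw [← (multipliable_one_sub_mul_pow hq _).tprod_mul (multipliable_one_sub_mul_pow hq _)]
    congr! 3 with i <;> ring
  have prefactor_eq : √x - (√x)⁻¹ = -(√x)⁻¹ * (1 - x) := by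
    have := Real.sqrt_pos.mpr hx
    field_simp
    rw [Real.sq_sqrt hx.le]
    ring
  rw [qTheta, prod_eq, prefactor_eq, modifiedTheta, qPochhammer_eq_one_sub_mul hq x]
  ring

lemma normalization_mul_neg_inv_sqrt_eq {q z : ℝ} (hq : 0 < q) (hz : 0 < z) (s : ℝ) (m : ℤ) :
    (-1 : ℝ) ^ (m + 1) * z ^ ((m : ℝ) + 1 / 2) *
        q ^ ((m : ℝ) * s + s / 2 - (m : ℝ) * ((m : ℝ) + 1) / 2) * -(√(z * q ^ s))⁻¹ =
      (-(z * q ^ (s - m))) ^ m * q ^ (m * (m - 1) / 2) := by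
  have sqrt_eq : √(z * q ^ s) = z ^ (1 / 2 : ℝ) * q ^ (s / 2) := by
    rw [Real.sqrt_eq_rpow, Real.mul_rpow hz.le (by positivity), ← Real.rpow_mul hq.le,
      mul_one_div]
  have triangular_cast : ((m * (m - 1) / 2 : ℤ) : ℝ) = (m : ℝ) * (m - 1) / 2 := by
    rw [Int.cast_div (Int.even_mul_pred_self m).two_dvd (by norm_num)]
    push_cast
    rfl
  have exponent_eq : (m : ℝ) * s + s / 2 - (m : ℝ) * ((m : ℝ) + 1) / 2 =
      (s - m) * m + ((m * (m - 1) / 2 : ℤ) : ℝ) + s / 2 := by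
    rw [triangular_cast]
    ring
  rw [sqrt_eq, exponent_eq, Real.rpow_add hq, Real.rpow_add hq, Real.rpow_add hz,
    Real.rpow_intCast, Real.rpow_intCast, Real.rpow_mul hq.le, Real.rpow_intCast,
    zpow_add_one₀ (by norm_num), neg_eq_neg_one_mul (z * _), mul_zpow, mul_zpow]
  field_simp

lemma normalized_qTheta_eq_modifiedTheta {q z : ℝ} (hq : q ∈ Set.Ioo (0 : ℝ) 1) (hz : 0 < z)
    (s : ℝ) (m : ℤ) :
    (-1 : ℝ) ^ (m + 1) * z ^ ((m : ℝ) + 1 / 2) *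
        q ^ ((m : ℝ) * s + s / 2 - (m : ℝ) * ((m : ℝ) + 1) / 2) * qTheta q (z * q ^ s) =
      modifiedTheta q (z * q ^ (s - m)) := by
  obtain ⟨hq₀, hq₁⟩ := hq
  have hq_norm : ‖q‖ < 1 := by rwa [Real.norm_of_nonneg hq₀.le]
  have arg_eq : z * q ^ s = q ^ m * (z * q ^ (s - m)) := by
    rw [Real.rpow_sub hq₀, Real.rpow_intCast]
    field_simp
  rw [qTheta_eq_modifiedTheta hq_norm (by positivity), ← mul_assoc,
    normalization_mul_neg_inv_sqrt_eq hq₀ hz, arg_eq,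
    zpow_mul_modifiedTheta_zpow_mul hq_norm hq₀.ne' (by positivity)]

lemma tendsto_const_mul_rpow_nhds_zero (c : ℝ) {t : ℝ} (ht : 0 < t) :
    Tendsto (fun q : ℝ ↦ c * q ^ t) (𝓝 0) (𝓝 0) := by
  simpa [Real.zero_rpow ht.ne'] using
    (Real.continuousAt_rpow_const 0 t (Or.inr ht.le)).tendsto.const_mul c

lemma tendsto_qPochhammer_const_mul_rpow (c : ℝ) {t : ℝ} (ht : 0 < t) :
    Tendsto (fun q : ℝ ↦ qPochhammer q (c * q ^ t)) (𝓝 0) (𝓝 1) := by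
  have := (continuousAt_qPochhammer (q := (0 : ℝ)) (by simp) 0).tendsto.comp
    (tendsto_id.prodMk_nhds (tendsto_const_mul_rpow_nhds_zero c ht))
  simpa only [qPochhammer_zero_right] using! this

lemma tendsto_modifiedTheta_const_mul_rpow (z : ℝ) {t : ℝ} (ht : t ∈ Set.Ioo (0 : ℝ) 1) :
    Tendsto (fun q : ℝ ↦ modifiedTheta q (z * q ^ t)) (𝓝[>] 0) (𝓝 1) := by
  have limit : Tendsto
      (fun q : ℝ ↦ qPochhammer q (z * q ^ t) * qPochhammer q (z⁻¹ * q ^ (1 - t))) (𝓝 0) (𝓝 1) := by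
    simpa only [mul_one] using (tendsto_qPochhammer_const_mul_rpow z ht.1).mul
      (tendsto_qPochhammer_const_mul_rpow z⁻¹ (sub_pos.mpr ht.2))
  refine (limit.mono_left nhdsWithin_le_nhds).congr' ?_
  filter_upwards [self_mem_nhdsWithin] with q hq
  have div_eq : q / (z * q ^ t) = z⁻¹ * q ^ (1 - t) := by
    rw [Real.rpow_sub hq, Real.rpow_one]
    ring
  rw [modifiedTheta, div_eq]

/-- For non-integer real `s` with floor `m = ⌊s⌋` and real `z > 0`,
`(-1)^{m+1} z^{m+1/2} q^{m s + s/2 - m(m+1)/2} θ_q(z q^s) → 1` as `q → 0⁺`,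
with `q` ranging over `(0,1)`. -/
theorem qTheta_asymptotics_nonintegral (s : ℝ) (hs : ∀ k : ℤ, s ≠ (k : ℝ))
    (m : ℤ) (hm : m = ⌊s⌋) (z : ℝ) (hz : 0 < z) :
    Tendsto (fun q : ℝ =>
        (-1 : ℝ) ^ (m + 1) * z ^ ((m : ℝ) + 1/2) *
          q ^ ((m : ℝ) * s + s/2 - (m : ℝ) * ((m : ℝ) + 1) / 2) *
          qTheta q (z * q ^ s))
      (𝓝[Set.Ioo (0:ℝ) 1] 0) (𝓝 1) := by
  have fract_mem : s - m ∈ Set.Ioo (0 : ℝ) 1 := by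
    have floor_lt : (m : ℝ) < s := (hm ▸ Int.floor_le s).lt_of_ne (hs m).symm
    have lt_floor_add_one : s < m + 1 := hm ▸ Int.lt_floor_add_one s
    constructor <;> linarith
  have limit : Tendsto (fun q : ℝ ↦ modifiedTheta q (z * q ^ (s - m)))
      (𝓝[Set.Ioo (0 : ℝ) 1] 0) (𝓝 1) :=
    (tendsto_modifiedTheta_const_mul_rpow z fract_mem).mono_left
      (nhdsWithin_mono 0 Set.Ioo_subset_Ioi_self)
  refine limit.congr' ?_
  filter_upwards [self_mem_nhdsWithin] with q hq
  exact (normalized_qTheta_eq_modifiedTheta hq hz s m).symm
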